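/- Let G be a finite r-regular graph with girth g, equipped with a random label assignment with probabilities (p₀,p). Let u be a vertex with neighbours v₁,…,v_r, and let i ≥ 1 with 2(i+2) < g−2. Then: (i) for every subset J ⊆ {1,…,r}, P(v_j ∉ R_i for all j ∈ J | u ∈ W_{i−1}) = ∏_{j∈J} P(v_j ∉ R_i | u ∈ W_{i−1}); and (ii) for every k ∈ {1,…,r} and every J ⊆ {1,…,r} \ {k}, P(v_j ∉ R_i for all j ∈ J | u ∈ B_{i−1} ∧ v_k ∈ R_{≤i−1}) = ∏_{j∈J} P(v_j ∉ R_i | u ∈ B_{i−1} ∧ v_k ∈ R_{≤i−1}). -/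

import Mathlib

open MeasureTheory ProbabilityTheory Filter Set

namespace InducedForest

variable {V : Type*}

/-- Label `i` is *relevant* for vertex `v` (w.r.t. the label assignment `S`):
either `i = 0` and `0 ∈ S v`, or `i ∈ S v`, no `j < i` is relevant for `v`, and
there is a unique neighbour of `v` having a relevant label strictly smaller than `i`. -/
def Relevant (G : SimpleGraph V) (S : V → Set ℕ) (i : ℕ) : V → Prop :=
  Nat.strongRecOn i (fun i ih v =>
    (i = 0 ∧ 0 ∈ S v) ∨
    (i ∈ S v ∧ (∀ j, (h : j < i) → ¬ ih j h v) ∧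
      (∃! u, G.Adj v u ∧ ∃ j, ∃ h : j < i, ih j h u)))

/-- `v` has some relevant label `≤ l`, i.e. `v ∈ R_{≤ l}`. -/
def RelevantLe (G : SimpleGraph V) (S : V → Set ℕ) (l : ℕ) (v : V) : Prop :=
  ∃ i ≤ l, Relevant G S i v

inductive Colour | white | blue | orange | purple
deriving DecidableEq

open Classical in
/-- The colour of `u` at time `l`. -/
noncomputable def colourAt (G : SimpleGraph V) (S : V → Set ℕ) (l : ℕ) (u : V) : Colour :=
  if RelevantLe G S l u then Colour.purple
  else if ∀ v, G.Adj u v → ¬ RelevantLe G S l v then Colour.white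
  else if ∃! v, G.Adj u v ∧ RelevantLe G S l v then Colour.blue
  else Colour.orange

/-- The set `W_l` of white vertices at time `l`. -/
def White (G : SimpleGraph V) (S : V → Set ℕ) (l : ℕ) : Set V :=
  {u | ¬ RelevantLe G S l u ∧ ∀ v, G.Adj u v → ¬ RelevantLe G S l v}

/-- The set `B_l` of blue vertices at time `l`. -/
def Blue (G : SimpleGraph V) (S : V → Set ℕ) (l : ℕ) : Set V :=
  {u | ¬ RelevantLe G S l u ∧ ∃! v, G.Adj u v ∧ RelevantLe G S l v}
/-- The label assignment determined by a sample point `ω`. -/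
def labels (ω : V → ℕ → Bool) : V → Set ℕ := fun v => {i | ω v i = true}

/-- `μ` is the random label assignment with probabilities `(p₀, p)`: the events
`i ∈ S(v)` are mutually independent, and each has probability `p₀` if `i = 0`
and `p` if `i ≥ 1`. -/
def IsLabelMeasure (μ : Measure (V → ℕ → Bool)) (p₀ p : ℝ) : Prop :=
  IsProbabilityMeasure μ ∧
  iIndepSet (fun q : V × ℕ => {ω : V → ℕ → Bool | ω q.1 q.2 = true}) μ ∧
  ∀ (v : V) (i : ℕ), μ {ω | ω v i = true} = ENNReal.ofReal (if i = 0 then p₀ else p)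

/-- Event that `u` is white at time `l`. -/
def WEv (G : SimpleGraph V) (l : ℕ) (u : V) : Set (V → ℕ → Bool) :=
  {ω | u ∈ White G (labels ω) l}

/-- Event that `u` is blue at time `l`. -/
def BEv (G : SimpleGraph V) (l : ℕ) (u : V) : Set (V → ℕ → Bool) :=
  {ω | u ∈ Blue G (labels ω) l}

/-- Event that `u` has relevant label `i`, i.e. `u ∈ R_i`. -/
def REv (G : SimpleGraph V) (i : ℕ) (u : V) : Set (V → ℕ → Bool) :=
  {ω | Relevant G (labels ω) i u}

/-- Event that `u` has a relevant label `≤ l`, i.e. `u ∈ R_{≤ l}`. -/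
def RLeEv (G : SimpleGraph V) (l : ℕ) (u : V) : Set (V → ℕ → Bool) :=
  {ω | RelevantLe G (labels ω) l u}

/-- `G` is `r`-regular. -/
def IsRegular (G : SimpleGraph V) (r : ℕ) : Prop :=
  ∀ v : V, (G.neighborSet v).ncard = r

lemma relevant_iff (G : SimpleGraph V) (S : V → Set ℕ) (i : ℕ) (w : V) :
    Relevant G S i w ↔ (i = 0 ∧ 0 ∈ S w) ∨
      (i ∈ S w ∧ (∀ j, j < i → ¬ Relevant G S j w) ∧
        ∃! x, G.Adj w x ∧ ∃ j, j < i ∧ Relevant G S j x) := by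
  unfold Relevant
  rw [Nat.strongRecOn_eq]
  simp only [exists_prop]

lemma relevant_zero (G : SimpleGraph V) (S : V → Set ℕ) (w : V) :
    Relevant G S 0 w ↔ 0 ∈ S w := by
  rw [relevant_iff]
  constructor
  · rintro (h | h)
    · exact h.2
    · exact h.1
  · intro h
    exact Or.inl ⟨rfl, h⟩

lemma Relevant.mem {G : SimpleGraph V} {S : V → Set ℕ} {i : ℕ} {w : V}
    (h : Relevant G S i w) : i ∈ S w := by
  rw [relevant_iff] at h
  rcases h with h | h
  · rw [h.1]; exact h.2
  · exact h.1

/-- The graph with all edges at `u` removed. -/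
def cut (G : SimpleGraph V) (u : V) : SimpleGraph V where
  Adj a b := G.Adj a b ∧ a ≠ u ∧ b ≠ u
  symm := ⟨fun _ _ h => ⟨h.1.symm, h.2.2, h.2.1⟩⟩
  loopless := ⟨fun a h => G.loopless.irrefl a h.1⟩

lemma cut_le (G : SimpleGraph V) (u : V) : cut G u ≤ G := fun _ _ h => h.1

/-- If `u` has no relevant label below `n`, then relevance away from `u` up to `n` may be
computed in the graph without `u`. -/
lemma relevant_cut (G : SimpleGraph V) (S : V → Set ℕ) (u : V) (n : ℕ)
    (hu : ∀ l, l < n → ¬ Relevant G S l u) (l : ℕ) :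
    l ≤ n → ∀ w, w ≠ u → (Relevant G S l w ↔ Relevant (cut G u) S l w) := by
  induction l using Nat.strong_induction_on with
  | _ l ih =>
  intro hl w hw
  rw [relevant_iff G, relevant_iff (cut G u)]
  have h1 : (∀ j, j < l → ¬ Relevant G S j w) ↔
      (∀ j, j < l → ¬ Relevant (cut G u) S j w) := by
    refine forall_congr' fun j => forall_congr' fun hj => ?_
    rw [ih j hj (by omega) w hw]
  have h2 : ∀ x, (G.Adj w x ∧ ∃ j, j < l ∧ Relevant G S j x) ↔
      ((cut G u).Adj w x ∧ ∃ j, j < l ∧ Relevant (cut G u) S j x) := by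
    intro x
    by_cases hx : x = u
    · subst hx
      constructor
      · rintro ⟨_, j, hj, h⟩
        exact absurd h (hu j (by omega))
      · rintro ⟨h, _⟩
        exact absurd rfl h.2.2
    · have h3 : (cut G u).Adj w x ↔ G.Adj w x := ⟨fun h => h.1, fun h => ⟨h, hw, hx⟩⟩
      have h4 : (∃ j, j < l ∧ Relevant G S j x) ↔
          ∃ j, j < l ∧ Relevant (cut G u) S j x := by
        refine exists_congr fun j => and_congr_right fun hj => ?_
        exact ih j hj (by omega) x hx
      rw [h3, h4]
  rw [h1]
  simp only [h2]

lemma not_relevant_of_cut (G : SimpleGraph V) (S : V → Set ℕ) (u : V) (n : ℕ)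
    (h0 : 0 ∉ S u)
    (h : ∀ m, m ≤ n → m ∈ S u → ∀ x, G.Adj u x → ∀ j, j < m → ¬ Relevant (cut G u) S j x)
    (m : ℕ) : m ≤ n → ¬ Relevant G S m u := by
  induction m using Nat.strong_induction_on with
  | _ m ih =>
  intro hm hr
  rw [relevant_iff] at hr
  rcases hr with hr | ⟨hmS, _, x, ⟨hx, j, hj, hjx⟩, _⟩
  · exact h0 hr.2
  · have := (relevant_cut G S u m (fun l hl => ih l hl (by omega)) j hj.le x hx.ne').1 hjx
    exact h m hm hmS x hx j hj this

lemma white_iff (G : SimpleGraph V) (S : V → Set ℕ) (u : V) (n : ℕ) :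
    u ∈ White G S n ↔ 0 ∉ S u ∧ ∀ x, G.Adj u x → ¬ RelevantLe (cut G u) S n x := by
  constructor
  · rintro ⟨h1, h2⟩
    have hu : ∀ l, l < n + 1 → ¬ Relevant G S l u := fun l hl h => h1 ⟨l, by omega, h⟩
    refine ⟨fun h => h1 ⟨0, by omega, (relevant_zero _ _ _).2 h⟩, ?_⟩
    rintro x hx ⟨l, hl, hr⟩
    exact h2 x hx ⟨l, hl, (relevant_cut G S u (n+1) hu l (by omega) x hx.ne').2 hr⟩
  · rintro ⟨h1, h2⟩
    have hu := not_relevant_of_cut G S u n h1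
      (fun m hm _ x hx j hj hr => h2 x hx ⟨j, by omega, hr⟩)
    refine ⟨?_, ?_⟩
    · rintro ⟨l, hl, hr⟩
      exact hu l hl hr
    · rintro x hx ⟨l, hl, hr⟩
      exact h2 x hx ⟨l, hl, (relevant_cut G S u (n+1) (fun l hl => hu l (by omega)) l
        (by omega) x hx.ne').1 hr⟩

lemma blue_iff (G : SimpleGraph V) (S : V → Set ℕ) (u z : V) (hz : G.Adj u z) (n : ℕ) :
    (u ∈ Blue G S n ∧ RelevantLe G S n z) ↔
      (0 ∉ S u ∧ RelevantLe (cut G u) S n z ∧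
        ∀ m, m ≤ n → m ∈ S u → ∀ j, j < m → ¬ Relevant (cut G u) S j z) ∧
      ∀ x, G.Adj u x → x ≠ z → ¬ RelevantLe (cut G u) S n x := by
  constructor
  · rintro ⟨⟨h1, y, _, hy⟩, h3⟩
    have hu : ∀ l, l < n + 1 → ¬ Relevant G S l u := fun l hl h => h1 ⟨l, by omega, h⟩
    have hc := relevant_cut G S u (n+1) hu
    have huniq : ∀ x, G.Adj u x → RelevantLe G S n x → x = z := fun x hx hr =>
      (hy x ⟨hx, hr⟩).trans (hy z ⟨hz, h3⟩).symm
    refine ⟨⟨fun h => h1 ⟨0, by omega, (relevant_zero _ _ _).2 h⟩, ?_, ?_⟩, ?_⟩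
    · obtain ⟨l, hl, hr⟩ := h3
      exact ⟨l, hl, (hc l (by omega) z hz.ne').1 hr⟩
    · intro m hm hmS j hj hr
      apply hu m (by omega)
      rw [relevant_iff]
      refine Or.inr ⟨hmS, fun j hj => hu j (by omega), z,
        ⟨hz, j, hj, (hc j (by omega) z hz.ne').2 hr⟩, ?_⟩
      rintro x ⟨hx, a, ha, har⟩
      exact huniq x hx ⟨a, by omega, har⟩
    · rintro x hx hxz ⟨l, hl, hr⟩
      exact hxz (huniq x hx ⟨l, hl, (hc l (by omega) x hx.ne').2 hr⟩)
  · rintro ⟨⟨h1, ⟨l, hl, hr⟩, h3⟩, h4⟩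
    have hu := not_relevant_of_cut G S u n h1 (by
      intro m hm hmS x hx j hj hjr
      by_cases hxz : x = z
      · subst hxz
        exact h3 m hm hmS j hj hjr
      · exact h4 x hx hxz ⟨j, by omega, hjr⟩)
    have hc := relevant_cut G S u (n+1) (fun l hl => hu l (by omega))
    have hzr : RelevantLe G S n z := ⟨l, hl, (hc l (by omega) z hz.ne').2 hr⟩
    refine ⟨⟨?_, z, ⟨hz, hzr⟩, ?_⟩, hzr⟩
    · rintro ⟨l, hl, hr⟩
      exact hu l hl hr
    · rintro x ⟨hx, a, ha, har⟩
      by_contra hxz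
      exact h4 x hx hxz ⟨a, ha, (hc a (by omega) x hx.ne').1 har⟩

/-- The ball of radius `n` around `w`. -/
def wball (G : SimpleGraph V) (w : V) (n : ℕ) : Set V :=
  {x | ∃ q : G.Walk w x, q.length ≤ n}

lemma wball_mono (G : SimpleGraph V) (w : V) {m n : ℕ} (h : m ≤ n) :
    wball G w m ⊆ wball G w n := fun _ ⟨q, hq⟩ => ⟨q, hq.trans h⟩

lemma self_mem_wball (G : SimpleGraph V) (w : V) (n : ℕ) : w ∈ wball G w n :=
  ⟨SimpleGraph.Walk.nil, by simp⟩

/-- Relevance of label `l` at `w` depends only on labels `≤ l` in the ball of radius `l`. -/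
lemma relevant_local (G : SimpleGraph V) (S T : V → Set ℕ) (l : ℕ) : ∀ w : V,
    (∀ x ∈ wball G w l, ∀ a, a ≤ l → (a ∈ S x ↔ a ∈ T x)) →
    (Relevant G S l w ↔ Relevant G T l w) := by
  induction l using Nat.strong_induction_on with
  | _ l ih =>
  intro w h
  rw [relevant_iff G S, relevant_iff G T]
  have h1 : (∀ j, j < l → ¬ Relevant G S j w) ↔ (∀ j, j < l → ¬ Relevant G T j w) := by
    refine forall_congr' fun j => forall_congr' fun hj => ?_
    rw [ih j hj w (fun x hx a ha => h x (wball_mono G w hj.le hx) a (by omega))]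
  have h2 : ∀ x, (G.Adj w x ∧ ∃ j, j < l ∧ Relevant G S j x) ↔
      (G.Adj w x ∧ ∃ j, j < l ∧ Relevant G T j x) := by
    intro x
    refine and_congr_right fun hx => exists_congr fun j => and_congr_right fun hj => ?_
    refine ih j hj x ?_
    rintro y ⟨q, hq⟩ a ha
    refine h y ⟨SimpleGraph.Walk.cons hx q, ?_⟩ a (by omega)
    rw [SimpleGraph.Walk.length_cons]; omega
  rw [h1, h w (self_mem_wball G w l) l le_rfl, h w (self_mem_wball G w l) 0 (Nat.zero_le _)]
  simp only [h2]

/-- `A` depends only on the labels `≤ n` of the vertices in `Z`. -/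
def DepOn (A : Set (V → ℕ → Bool)) (Z : Set V) (n : ℕ) : Prop :=
  ∀ ω ω' : V → ℕ → Bool, (∀ x ∈ Z, ∀ a, a ≤ n → ω x a = ω' x a) → (ω ∈ A ↔ ω' ∈ A)

lemma DepOn.inter {A B : Set (V → ℕ → Bool)} {Z : Set V} {n : ℕ}
    (hA : DepOn A Z n) (hB : DepOn B Z n) : DepOn (A ∩ B) Z n := fun ω ω' h =>
  and_congr (hA ω ω' h) (hB ω ω' h)

lemma depOn_univ (Z : Set V) (n : ℕ) : DepOn (Set.univ) Z n := fun _ _ _ => Iff.rfl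

lemma relevant_dep (G : SimpleGraph V) (w : V) {l n : ℕ} (hl : l ≤ n)
    {ω ω' : V → ℕ → Bool} (h : ∀ x ∈ wball G w n, ∀ a, a ≤ n → ω x a = ω' x a) :
    Relevant G (labels ω) l w ↔ Relevant G (labels ω') l w := by
  apply relevant_local
  intro x hx a ha
  simp only [labels, Set.mem_ofPred_eq]
  rw [h x (wball_mono G w hl hx) a (by omega)]

lemma relevantLe_dep (G : SimpleGraph V) (w : V) {l n : ℕ} (hl : l ≤ n)
    {ω ω' : V → ℕ → Bool} (h : ∀ x ∈ wball G w n, ∀ a, a ≤ n → ω x a = ω' x a) :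
    RelevantLe G (labels ω) l w ↔ RelevantLe G (labels ω') l w := by
  unfold RelevantLe
  refine exists_congr fun a => and_congr_right fun ha => ?_
  exact relevant_dep G w (ha.trans hl) h

lemma cut_support (G : SimpleGraph V) (u : V) {a b : V} (q : (cut G u).Walk a b)
    (ha : a ≠ u) : u ∉ q.support := by
  induction q with
  | nil => simpa using ha.symm
  | cons h q ih =>
    rw [SimpleGraph.Walk.support_cons, List.mem_cons]
    rintro (h' | h')
    · exact ha h'.symm
    · exact ih h.2.2 h'

lemma not_mem_wball_cut (G : SimpleGraph V) (u w : V) (hw : w ≠ u) (n : ℕ) :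
    u ∉ wball (cut G u) w n := by
  rintro ⟨q, _⟩
  exact cut_support G u q hw q.end_mem_support

lemma disjoint_wball (G : SimpleGraph V) (u a b : V) (ha : G.Adj u a) (hb : G.Adj u b)
    (hab : a ≠ b) (n g : ℕ) (hg : (g : ℕ∞) ≤ G.egirth) (hn : 2 * n + 2 < g) :
    Disjoint (wball (cut G u) a n) (wball (cut G u) b n) := by
  classical
  rw [Set.disjoint_left]
  rintro x ⟨q, hq⟩ ⟨q', hq'⟩
  let s := (q.append q'.reverse).bypass
  have hs : s.IsPath := SimpleGraph.Walk.bypass_isPath _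
  have hsl : s.length ≤ 2 * n := by
    refine (SimpleGraph.Walk.length_bypass_le_length _).trans ?_
    rw [SimpleGraph.Walk.length_append, SimpleGraph.Walk.length_reverse]
    omega
  have hsu : u ∉ s.support := cut_support G u s ha.ne'
  let t := s.mapLe (cut_le G u)
  have ht : t.IsPath := hs.mapLe _
  have htu : u ∉ t.support := by
    simpa [t] using hsu
  have htl : t.length = s.length := by simp [t]
  have hc : (SimpleGraph.Walk.cons ha (t.concat hb.symm)).IsCycle := by
    rw [SimpleGraph.Walk.cons_isCycle_iff]
    refine ⟨ht.concat htu hb.symm, ?_⟩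
    rw [SimpleGraph.Walk.edges_concat, List.concat_eq_append, List.mem_append]
    rintro (h | h)
    · exact htu (t.fst_mem_support_of_mem_edges h)
    · rw [List.mem_singleton, Sym2.eq_iff] at h
      rcases h with h | h
      · exact hb.ne h.1
      · exact hab h.2
  have := hg.trans (SimpleGraph.egirth_le_length hc)
  rw [Nat.cast_le, SimpleGraph.Walk.length_cons, SimpleGraph.Walk.length_concat] at this
  omega

lemma coord_indep {μ : Measure (V → ℕ → Bool)}
    (h : iIndepSet (fun q : V × ℕ => {ω : V → ℕ → Bool | ω q.1 q.2 = true}) μ) :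
    iIndepFun (fun (q : V × ℕ) (ω : V → ℕ → Bool) => ω q.1 q.2) μ := by
  rw [iIndepFun_iff_measure_inter_preimage_eq_mul]
  intro F sets _
  rw [iIndepSet_iff] at h
  apply h
  intro q _
  rw [measurableSet_generateFrom_singleton_iff]
  by_cases h1 : true ∈ sets q <;> by_cases h2 : false ∈ sets q
  · right; right; right
    ext ω
    cases hω : ω q.1 q.2 <;> simp [hω, h1, h2]
  · right; left
    ext ω
    cases hω : ω q.1 q.2 <;> simp [hω, h1, h2]
  · right; right; left
    ext ω
    cases hω : ω q.1 q.2 <;> simp [hω, h1, h2]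
  · left
    ext ω
    cases hω : ω q.1 q.2 <;> simp [hω, h1, h2]

lemma DepOn.preimage {A : Set (V → ℕ → Bool)} {Z : Finset V} {n : ℕ}
    (hA : DepOn A (Z : Set V) n) :
    let φ := fun (ω : V → ℕ → Bool) (q : (Z ×ˢ Finset.range (n + 1) : Finset (V × ℕ))) =>
      ω q.1.1 q.1.2
    A = φ ⁻¹' (φ '' A) := by
  intro φ
  refine subset_antisymm (Set.subset_preimage_image _ _) ?_
  rintro ω ⟨ω', hω', h⟩
  refine (hA ω' ω ?_).1 hω'
  intro x hx a ha
  exact congrFun h ⟨(x, a), by simpa using ⟨hx, by omega⟩⟩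

lemma block_measurable (Z : Finset V) (n : ℕ) :
    Measurable (fun (ω : V → ℕ → Bool) (q : (Z ×ˢ Finset.range (n + 1) : Finset (V × ℕ))) =>
      ω q.1.1 q.1.2) := by
  refine measurable_pi_lambda _ fun q => ?_
  exact (measurable_pi_apply q.1.2).comp (measurable_pi_apply q.1.1)

lemma DepOn.measurableSet {A : Set (V → ℕ → Bool)} {Z : Finset V} {n : ℕ}
    (hA : DepOn A (Z : Set V) n) : MeasurableSet A := by
  rw [hA.preimage]
  exact block_measurable Z n (Set.toFinite _).measurableSet

lemma indep_blocks {ι : Type*} [Fintype ι] {μ : Measure (V → ℕ → Bool)}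
    (h : iIndepFun (fun (q : V × ℕ) (ω : V → ℕ → Bool) => ω q.1 q.2) μ)
    (Z : ι → Finset V) (hZ : ∀ a b, a ≠ b → Disjoint (Z a) (Z b)) (n : ℕ)
    (A : ι → Set (V → ℕ → Bool)) (hA : ∀ o, DepOn (A o) (Z o : Set V) n) :
    μ (⋂ o, A o) = ∏ o, μ (A o) := by
  classical
  have := h.isProbabilityMeasure
  suffices hs : ∀ s : Finset ι, μ (⋂ o ∈ s, A o) = ∏ o ∈ s, μ (A o) by
    simpa using hs Finset.univ
  intro s
  induction s using Finset.induction_on with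
  | empty => simp
  | insert a s ha ih =>
    rw [Finset.set_biInter_insert, Finset.prod_insert ha, ← ih]
    have hB : DepOn (⋂ o ∈ s, A o) ((s.biUnion Z : Finset V) : Set V) n := by
      intro ω ω' hω
      simp only [Set.mem_iInter]
      refine forall_congr' fun o => forall_congr' fun ho => hA o ω ω' ?_
      intro x hx
      refine hω x ?_
      rw [Finset.mem_coe, Finset.mem_biUnion]
      exact ⟨o, ho, hx⟩
    have hd : Disjoint (Z a) (s.biUnion Z) := by
      rw [Finset.disjoint_biUnion_right]
      intro o ho
      exact hZ a o (fun hao => ha (hao ▸ ho))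
    have hf := h.indepFun_finset (Z a ×ˢ Finset.range (n + 1))
      (s.biUnion Z ×ˢ Finset.range (n + 1)) (Finset.disjoint_product.2 (Or.inl hd))
      (fun q => (measurable_pi_apply q.2).comp (measurable_pi_apply q.1))
    rw [(hA a).preimage, hB.preimage]
    exact hf.measure_inter_preimage_eq_mul _ _ (Set.toFinite _).measurableSet
      (Set.toFinite _).measurableSet

lemma cond_aux {α : Type*} [Fintype α] [DecidableEq α] {μ : Measure (V → ℕ → Bool)}
    [IsProbabilityMeasure μ]
    (h : iIndepFun (fun (q : V × ℕ) (ω : V → ℕ → Bool) => ω q.1 q.2) μ)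
    (Z : Option α → Finset V) (hZ : ∀ a b, a ≠ b → Disjoint (Z a) (Z b)) (n : ℕ)
    (M : Option α → Set (V → ℕ → Bool)) (hM : ∀ o, DepOn (M o) (Z o : Set V) n)
    (N : Set (V → ℕ → Bool)) (hN : N = ⋂ o, M o) (hN0 : μ N ≠ 0)
    (E E' : α → Set (V → ℕ → Bool)) (J : Finset α)
    (hE' : ∀ j ∈ J, DepOn (E' j) (Z (some j) : Set V) n)
    (hE : ∀ j ∈ J, ∀ ω ∈ N, (ω ∈ E j ↔ ω ∈ E' j)) :
    μ[|N] (⋂ j ∈ J, E j) = ∏ j ∈ J, μ (M (some j) ∩ E' j) / μ (M (some j)) := by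
  have hNm : MeasurableSet N := by
    rw [hN]
    exact MeasurableSet.iInter fun o => (hM o).measurableSet
  have hNp : μ N = μ (M none) * ∏ j, μ (M (some j)) := by
    rw [hN, indep_blocks h Z hZ n M hM, Fintype.prod_option]
  have hM0 : ∀ j, μ (M (some j)) ≠ 0 := by
    intro j hj
    apply hN0
    rw [hNp, Finset.prod_eq_zero (Finset.mem_univ j) hj, mul_zero]
  let X : Option α → Set (V → ℕ → Bool) := fun o =>
    o.elim (M none) (fun j => if j ∈ J then M (some j) ∩ E' j else M (some j))
  have hX : ∀ o, DepOn (X o) (Z o : Set V) n := by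
    rintro (_ | j)
    · exact hM none
    · by_cases hj : j ∈ J
      · simpa [X, hj] using (hM (some j)).inter (hE' j hj)
      · simpa [X, hj] using hM (some j)
  have hNX : N ∩ (⋂ j ∈ J, E j) = ⋂ o, X o := by
    ext ω
    have : ω ∈ N ∩ (⋂ j ∈ J, E j) ↔ ω ∈ N ∧ ∀ j ∈ J, ω ∈ E' j := by
      simp only [Set.mem_inter_iff, Set.mem_iInter]
      refine and_congr_right fun hω => forall_congr' fun j => forall_congr' fun hj => ?_
      exact hE j hj ω hω
    rw [this, hN]
    simp only [Set.mem_iInter, Option.forall]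
    constructor
    · rintro ⟨⟨h0, h1⟩, h2⟩
      refine ⟨h0, fun j => ?_⟩
      by_cases hj : j ∈ J
      · simpa [X, hj] using ⟨h1 j, h2 j hj⟩
      · simpa [X, hj] using h1 j
    · rintro ⟨h0, h1⟩
      refine ⟨⟨h0, fun j => ?_⟩, fun j hj => ?_⟩
      · have := h1 j
        by_cases hj : j ∈ J
        · simp only [X, hj, Option.elim, if_true] at this
          exact this.1
        · simpa [X, hj] using this
      · have := h1 j
        simp only [X, hj, Option.elim, if_true] at this
        exact this.2
  rw [cond_apply hNm, hNX, indep_blocks h Z hZ n X hX, Fintype.prod_option]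
  have hprod : ∏ j, μ (X (some j)) =
      (∏ j ∈ J, μ (M (some j) ∩ E' j) / μ (M (some j))) * ∏ j, μ (M (some j)) := by
    rw [← Finset.prod_subset (Finset.subset_univ J)
      (f := fun j => if j ∈ J then μ (M (some j) ∩ E' j) / μ (M (some j)) else 1)
      (by intro j _ hj; simp [hj]) |>.symm.trans (Finset.prod_congr rfl
        (by intro j hj; simp [hj])), ← Finset.prod_mul_distrib]
    refine Finset.prod_congr rfl fun j _ => ?_
    by_cases hj : j ∈ J
    · simp only [X, hj, Option.elim, if_true]
      rw [ENNReal.div_mul_cancel (hM0 j) (measure_ne_top _ _)]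
    · simp [X, hj]
  have hX0 : X none = M none := rfl
  rw [hprod, hX0, mul_left_comm (μ (M none)), ← hNp, mul_left_comm,
    ENNReal.inv_mul_cancel hN0 (measure_ne_top _ _), mul_one]

lemma cond_indep {α : Type*} [Fintype α] [DecidableEq α] {μ : Measure (V → ℕ → Bool)}
    [IsProbabilityMeasure μ]
    (h : iIndepFun (fun (q : V × ℕ) (ω : V → ℕ → Bool) => ω q.1 q.2) μ)
    (Z : Option α → Finset V) (hZ : ∀ a b, a ≠ b → Disjoint (Z a) (Z b)) (n : ℕ)
    (M : Option α → Set (V → ℕ → Bool)) (hM : ∀ o, DepOn (M o) (Z o : Set V) n)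
    (N : Set (V → ℕ → Bool)) (hN : N = ⋂ o, M o) (hN0 : μ N ≠ 0)
    (E E' : α → Set (V → ℕ → Bool)) (J : Finset α)
    (hE' : ∀ j ∈ J, DepOn (E' j) (Z (some j) : Set V) n)
    (hE : ∀ j ∈ J, ∀ ω ∈ N, (ω ∈ E j ↔ ω ∈ E' j)) :
    μ[|N] (⋂ j ∈ J, E j) = ∏ j ∈ J, μ[|N] (E j) := by
  rw [cond_aux h Z hZ n M hM N hN hN0 E E' J hE' hE]
  refine Finset.prod_congr rfl fun j hj => ?_
  have := cond_aux h Z hZ n M hM N hN hN0 E E' {j}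
    (fun a ha => hE' a (by rw [Finset.mem_singleton] at ha; rwa [ha]))
    (fun a ha => hE a (by rw [Finset.mem_singleton] at ha; rwa [ha]))
  simpa using this.symm

lemma cylinder_pos [Fintype V] {p₀ p : ℝ} (hp₀ : p₀ ∈ Ioo (0 : ℝ) 1) (hp : p ∈ Ioo (0 : ℝ) 1)
    {μ : Measure (V → ℕ → Bool)} (hμ : IsLabelMeasure μ p₀ p) (t : V → ℕ → Bool) (n : ℕ) :
    μ {ω | ∀ x a, a ≤ n → ω x a = t x a} ≠ 0 := by
  classical
  obtain ⟨hP, hI, hm⟩ := hμ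
  have hind := coord_indep hI
  rw [iIndepFun_iff_measure_inter_preimage_eq_mul] at hind
  have h1 := hind ((Finset.univ : Finset V) ×ˢ Finset.range (n + 1))
    (sets := fun q => {t q.1 q.2}) (fun _ _ => measurableSet_singleton _)
  have h2 : {ω : V → ℕ → Bool | ∀ x a, a ≤ n → ω x a = t x a} =
      ⋂ q ∈ (Finset.univ : Finset V) ×ˢ Finset.range (n + 1),
        (fun ω : V → ℕ → Bool => ω q.1 q.2) ⁻¹' {t q.1 q.2} := by
    ext ω
    simp
  rw [h2, h1, Finset.prod_ne_zero_iff]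
  rintro ⟨x, a⟩ _
  have hpos : 0 < (if a = 0 then p₀ else p) ∧ (if a = 0 then p₀ else p) < 1 := by
    split_ifs
    · exact hp₀
    · exact hp
  cases ht : t x a
  · have h3 : (fun ω : V → ℕ → Bool => ω x a) ⁻¹' {false} = {ω | ω x a = true}ᶜ := by
      ext ω; simp
    have hmeas : MeasurableSet {ω : V → ℕ → Bool | ω x a = true} :=
      measurableSet_eq_fun ((measurable_pi_apply a).comp (measurable_pi_apply x))
        measurable_const
    simp only [ht, h3]
    rw [prob_compl_eq_one_sub hmeas, hm, Ne, tsub_eq_zero_iff_le, not_le]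
    rw [ENNReal.ofReal_lt_one]
    exact hpos.2
  · have h3 : (fun ω : V → ℕ → Bool => ω x a) ⁻¹' {true} = {ω | ω x a = true} := by
      ext ω; simp
    simp only [ht, h3]
    rw [hm, Ne, ENNReal.ofReal_eq_zero, not_le]
    exact hpos.1

/-- Conditional on `u ∈ W_{i−1}` (resp. on `u ∈ B_{i−1}` and
`v k ∈ R_{≤ i−1}`), the events that the neighbours of `u` do not get relevant label `i`
are mutually independent. -/
theorem not_relevant_events_conditionally_independent
    [Fintype V] (r g : ℕ) (G : SimpleGraph V)
    (hreg : IsRegular G r) (hg : (g : ℕ∞) ≤ G.egirth)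
    (p₀ p : ℝ) (hp₀ : p₀ ∈ Ioo (0 : ℝ) 1) (hp : p ∈ Ioo (0 : ℝ) 1)
    (μ : Measure (V → ℕ → Bool)) (hμ : IsLabelMeasure μ p₀ p)
    (u : V) (v : Fin r → V) (hadj : ∀ j, G.Adj u (v j)) (hinj : Function.Injective v)
    (i : ℕ) (hi : 1 ≤ i) (hik : 2 * (i + 2) < g - 2) :
    (∀ J : Finset (Fin r),
      μ[|WEv G (i - 1) u] (⋂ j ∈ J, {ω | ¬ Relevant G (labels ω) i (v j)})
        = ∏ j ∈ J, μ[|WEv G (i - 1) u] {ω | ¬ Relevant G (labels ω) i (v j)}) ∧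
    (∀ k : Fin r, ∀ J : Finset (Fin r), k ∉ J →
      μ[|BEv G (i - 1) u ∩ RLeEv G (i - 1) (v k)]
          (⋂ j ∈ J, {ω | ¬ Relevant G (labels ω) i (v j)})
        = ∏ j ∈ J, μ[|BEv G (i - 1) u ∩ RLeEv G (i - 1) (v k)]
            {ω | ¬ Relevant G (labels ω) i (v j)}) := by
  classical
  obtain ⟨n, rfl⟩ : ∃ n, i = n + 1 := ⟨i - 1, by omega⟩
  simp only [Nat.add_sub_cancel]
  have := hμ.1
  have hind := coord_indep hμ.2.1
  have hnb : ∀ x, G.Adj u x ↔ ∃ j, v j = x := by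
    have hsub : Set.range v ⊆ G.neighborSet u := by
      rintro _ ⟨j, rfl⟩
      exact hadj j
    have heq : Set.range v = G.neighborSet u := by
      refine Set.eq_of_subset_of_ncard_le hsub ?_ (Set.toFinite _)
      rw [hreg u, ← Set.image_univ, Set.ncard_image_of_injective _ hinj, Set.ncard_univ,
        Nat.card_eq_fintype_card, Fintype.card_fin]
    intro x
    rw [← SimpleGraph.mem_neighborSet, ← heq, Set.mem_range]
  let Y : Fin r → Finset V := fun j => (wball (cut G u) (v j) (n + 1)).toFinset
  have hYc : ∀ j, (Y j : Set V) = wball (cut G u) (v j) (n + 1) := fun j => by simp [Y]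
  have huY : ∀ j, u ∉ Y j := by
    intro j h
    rw [← Finset.mem_coe, hYc] at h
    exact not_mem_wball_cut G u (v j) (hadj j).ne' _ h
  have hYd : ∀ a b, a ≠ b → Disjoint (Y a) (Y b) := by
    intro a b hab
    rw [← Finset.disjoint_coe, hYc, hYc]
    exact disjoint_wball G u _ _ (hadj a) (hadj b) (hinj.ne hab) (n + 1) g hg (by omega)
  let C : Fin r → Set (V → ℕ → Bool) := fun j =>
    {ω | ¬ RelevantLe (cut G u) (labels ω) n (v j)}
  let E' : Fin r → Set (V → ℕ → Bool) := fun j =>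
    {ω | ¬ Relevant (cut G u) (labels ω) (n + 1) (v j)}
  have hC : ∀ j, DepOn (C j) (Y j : Set V) (n + 1) := by
    intro j ω ω' h
    rw [hYc] at h
    exact not_congr (relevantLe_dep _ _ (by omega) h)
  have hE' : ∀ j, DepOn (E' j) (Y j : Set V) (n + 1) := by
    intro j ω ω' h
    rw [hYc] at h
    exact not_congr (relevant_dep _ _ le_rfl h)
  have hEE : ∀ j ω, (¬ RelevantLe G (labels ω) n u) →
      (ω ∈ {ω | ¬ Relevant G (labels ω) (n + 1) (v j)} ↔ ω ∈ E' j) := by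
    intro j ω h
    exact not_congr (relevant_cut G (labels ω) u (n + 1)
      (fun l hl hr => h ⟨l, by omega, hr⟩) (n + 1) le_rfl _ (hadj j).ne')
  constructor
  · intro J
    refine cond_indep hind (fun o => o.elim {u} Y) ?_ (n + 1)
      (fun o => o.elim {ω | 0 ∉ labels ω u} C) ?_ _ ?_ ?_ _ E' J (fun j _ => hE' j) ?_
    · rintro (_ | a) (_ | b) hab
      · exact absurd rfl hab
      · simpa using huY b
      · simpa using huY a
      · exact hYd a b (fun h => hab (by rw [h]))
    · rintro (_ | j)
      · intro ω ω' h
        have := h u (by simp) 0 (by omega)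
        simp [labels, this]
      · exact hC j
    · ext ω
      simp only [WEv, Set.mem_ofPred_eq, white_iff, Set.mem_iInter, Option.forall, hnb]
      refine and_congr Iff.rfl ?_
      constructor
      · intro h j
        exact h _ ⟨j, rfl⟩
      · rintro h _ ⟨j, rfl⟩
        exact h j
    · refine fun h0 => cylinder_pos hp₀ hp hμ (fun _ _ => false) n
        (measure_mono_null ?_ h0)
      intro ω hω
      have hno : ∀ x, ¬ RelevantLe G (labels ω) n x := by
        rintro x ⟨l, hl, hr⟩
        have h1 := hr.mem
        have h2 := hω x l hl
        simp [labels, h2] at h1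
      exact ⟨hno u, fun x _ => hno x⟩
    · intro j _ ω hω
      exact hEE j ω hω.1
  · intro k J hk
    refine cond_indep hind
      (fun o => o.elim (insert u (Y k)) (fun j => if j = k then ∅ else Y j)) ?_ (n + 1)
      (fun o => o.elim {ω | 0 ∉ labels ω u ∧ RelevantLe (cut G u) (labels ω) n (v k) ∧
        ∀ m, m ≤ n → m ∈ labels ω u → ∀ j, j < m → ¬ Relevant (cut G u) (labels ω) j (v k)}
        (fun j => if j = k then Set.univ else C j)) ?_ _ ?_ ?_ _ E' J ?_ ?_
    · have key : ∀ b, Disjoint (insert u (Y k)) (if b = k then ∅ else Y b) := by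
        intro b
        by_cases hb : b = k
        · simp [hb]
        · rw [if_neg hb, Finset.disjoint_insert_left]
          exact ⟨huY b, hYd k b (Ne.symm hb)⟩
      rintro (_ | a) (_ | b) hab
      · exact absurd rfl hab
      · exact key b
      · exact (key a).symm
      · by_cases ha : a = k
        · simp [ha]
        · by_cases hb : b = k
          · simp [hb]
          · simpa [ha, hb] using hYd a b (fun h => hab (by rw [h]))
    · rintro (_ | j)
      · intro ω ω' h
        have hu : ∀ m, m ≤ n → (m ∈ labels ω u ↔ m ∈ labels ω' u) := by
          intro m hm
          have := h u (by simp) m (by omega)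
          simp [labels, this]
        have hY' : ∀ x ∈ wball (cut G u) (v k) (n + 1), ∀ a, a ≤ n + 1 → ω x a = ω' x a := by
          intro x hx
          rw [← hYc] at hx
          exact h x (by simpa using Or.inr hx)
        refine and_congr (not_congr (hu 0 (by omega)))
          (and_congr (relevantLe_dep _ _ (by omega) hY') ?_)
        refine forall_congr' fun m => forall_congr' fun hm => ?_
        rw [hu m hm]
        refine forall_congr' fun _ => forall_congr' fun j => forall_congr' fun hj => ?_
        exact not_congr (relevant_dep _ _ (by omega) hY')
      · by_cases hj : j = k
        · simp only [Option.elim, hj, if_true]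
          exact depOn_univ _ _
        · simp only [Option.elim, hj, if_false]
          exact hC j
    · ext ω
      have := blue_iff G (labels ω) u (v k) (hadj k) n
      simp only [BEv, RLeEv, Set.mem_inter_iff, Set.mem_ofPred_eq]
      rw [this]
      simp only [Set.mem_iInter, Option.forall]
      refine and_congr Iff.rfl ?_
      constructor
      · intro h j
        by_cases hj : j = k
        · simp [hj]
        · simp only [Option.elim, hj, if_false]
          exact h _ (hadj j) (hinj.ne hj)
      · rintro h x hx hxk
        obtain ⟨j, rfl⟩ := (hnb x).1 hx
        have hj : j ≠ k := fun hj => hxk (by rw [hj])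
        have := h j
        simp only [Option.elim, hj, if_false] at this
        exact this
    · refine fun h0 => cylinder_pos hp₀ hp hμ (fun x a => decide (x = v k ∧ a = 0)) n
        (measure_mono_null ?_ h0)
      intro ω hω
      have hno : ∀ x, RelevantLe G (labels ω) n x → x = v k := by
        rintro x ⟨l, hl, hr⟩
        have h1 := hr.mem
        have h2 := hω x l hl
        simp only [labels, Set.mem_ofPred_eq, h2, decide_eq_true_eq] at h1
        exact h1.1
      have hyes : RelevantLe G (labels ω) n (v k) := by
        refine ⟨0, by omega, (relevant_zero _ _ _).2 ?_⟩
        have h2 := hω (v k) 0 (by omega)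
        simp [labels, h2]
      exact ⟨⟨fun h => (hadj k).ne (hno u h), v k, ⟨hadj k, hyes⟩, fun x hx => hno x hx.2⟩, hyes⟩
    · intro j hj
      have hjk : j ≠ k := fun h => hk (h ▸ hj)
      simp only [Option.elim, hjk, if_false]
      exact hE' j
    · intro j _ ω hω
      exact hEE j ω hω.1.1

end InducedForest
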